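/- For multi-indices J, L ∈ {1,...,n}^d of the same type, ∫ u_{1,j_1} ⋯ u_{1,j_d} · conj(u_{1,l_1}) ⋯ conj(u_{1,l_d}) dμ(U) = (∏_m r_m!) / (n(n+1)⋯(n+d−1)), where r_m is the number of occurrences of the value m in J. -/

import Mathlib

open MeasureTheory Matrix

noncomputable instance unitaryGroupMeasurableSpace (n : ℕ) :
    MeasurableSpace (Matrix.unitaryGroup (Fin n) ℂ) := borel _

/-!
Let `x` be a fixed row of the Haar-distributed matrix `U`. As `U` and `U * V` have the same law,
`x` and `x ᵥ* V` have the same law for each unitary `V`. Diagonal `V` make distinct monomials in the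
entries of `x` orthogonal, and a `V` with prescribed column shows that `∫ |⟨x, w⟩| ^ (2 * d)` is a
multiple `c * ‖w‖ ^ (2 * d)`. By the multinomial theorem and orthogonality the latter reads
`∑ α, M α ^ 2 * (∫ |x ^ α| ^ 2) * |w ^ α| ^ 2 = c * ∑ α, M α * |w ^ α| ^ 2`, where `M α` is the
multinomial coefficient and `α` runs over the exponents of degree `d`. Hence
`M α * ∫ |x ^ α| ^ 2 = c` for every `α`, and summing over the `(n + d - 1).choose d` exponents gives
`1`, because `‖x‖ = 1`.
-/

open Finset Module
open scoped ComplexConjugate Nat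

namespace UnitaryRow

theorem exists_circle_pow_mul_conj_pow_ne_one {a b : ℕ} (hab : a ≠ b) :
    ∃ z : Circle, (z : ℂ) ^ a * conj (z : ℂ) ^ b ≠ 1 := by
  have : NeZero (a - b : ℤ) := ⟨sub_ne_zero.2 (Nat.cast_injective.ne hab)⟩
  obtain ⟨z, hz⟩ := (Circle.isQuotientCoveringMap_zpow (a - b)).surjective (Circle.exp Real.pi)
  refine ⟨z, ?_⟩
  rw [← Circle.coe_inv_eq_conj, ← Circle.coe_pow, ← Circle.coe_pow, ← Circle.coe_mul, inv_pow,
    ← zpow_natCast, ← zpow_natCast, ← _root_.zpow_sub, Ne, Circle.coe_eq_one]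
  exact hz.trans_ne Circle.exp_pi_ne_one

theorem card_piAntidiag_nat_eq_choose {ι : Type*} [DecidableEq ι] (s : Finset ι) (d : ℕ) :
    #(s.piAntidiag d) = (#s + d - 1).choose d := by
  rw [← card_finsuppAntidiag_nat_eq_choose, finsuppAntidiag, card_map, card_attach]

theorem eq_of_sum_mul_prod_pow_eq {ι R : Type*} [Fintype ι] [CommRing R] [IsDomain R]
    {S : Set R} (hS : S.Infinite) {A : Finset (ι → ℕ)} {a b : (ι → ℕ) → R}
    (h : ∀ x : ι → R, (∀ m, x m ∈ S) →
      ∑ α ∈ A, a α * ∏ m, x m ^ α m = ∑ α ∈ A, b α * ∏ m, x m ^ α m) :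
    ∀ α ∈ A, a α = b α := by
  classical
  let poly (c : (ι → ℕ) → R) : MvPolynomial ι R :=
    ∑ α ∈ A, MvPolynomial.monomial (Finsupp.equivFunOnFinite.symm α) (c α)
  have eval_poly (c : (ι → ℕ) → R) (x : ι → R) :
      MvPolynomial.eval x (poly c) = ∑ α ∈ A, c α * ∏ m, x m ^ α m := by
    simp [poly, MvPolynomial.eval_monomial, Finsupp.prod_fintype]
  have coeff_poly (c : (ι → ℕ) → R) {α : ι → ℕ} (hα : α ∈ A) :
      (poly c).coeff (Finsupp.equivFunOnFinite.symm α) = c α := by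
    simp [poly, MvPolynomial.coeff_sum, MvPolynomial.coeff_monomial, hα]
  have hpoly : poly a = poly b :=
    MvPolynomial.funext_set (fun _ => S) (fun _ => hS) fun x hx => by
      simpa only [eval_poly] using h x fun m => hx m trivial
  intro α hα
  rw [← coeff_poly a hα, hpoly, coeff_poly b hα]

theorem integral_norm_sq_sum_of_pairwise_orthogonal {X κ 𝕜 : Type*} [RCLike 𝕜]
    [MeasurableSpace X] {μ : Measure X} {s : Finset κ} {f : κ → X → 𝕜}
    (hf : ∀ k ∈ s, MemLp (f k) 2 μ)
    (horth : (s : Set κ).Pairwise fun k l => ∫ x, f k x * conj (f l x) ∂μ = 0) :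
    ∫ x, ‖∑ k ∈ s, f k x‖ ^ 2 ∂μ = ∑ k ∈ s, ∫ x, ‖f k x‖ ^ 2 ∂μ := by
  have hint {k l : κ} (hk : k ∈ s) (hl : l ∈ s) :
      Integrable (fun x => f k x * conj (f l x)) μ :=
    (hf k hk).integrable_mul (hf l hl).star
  have hexpand (x : X) :
      ((‖∑ k ∈ s, f k x‖ ^ 2 : ℝ) : 𝕜) = ∑ k ∈ s, ∑ l ∈ s, f k x * conj (f l x) := by
    rw [RCLike.ofReal_pow, ← RCLike.mul_conj, map_sum, sum_mul_sum]
  apply RCLike.ofReal_injective (K := 𝕜)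
  rw [← integral_ofReal, RCLike.ofReal_sum]
  simp_rw [hexpand]
  rw [integral_finsetSum _ fun k hk => integrable_finsetSum _ fun l hl => hint hk hl]
  refine sum_congr rfl fun k hk => ?_
  rw [integral_finsetSum _ fun l hl => hint hk hl,
    sum_eq_single_of_mem k hk fun l hl hlk => horth hk hl hlk.symm, ← integral_ofReal]
  simp_rw [RCLike.mul_conj, RCLike.ofReal_pow]

theorem eq_of_isMulLeftInvariant_of_isMulRightInvariant {G : Type*} [Group G]
    [MeasurableSpace G] [MeasurableMul₂ G] (μ ν : Measure G) [IsProbabilityMeasure μ]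
    [IsProbabilityMeasure ν] [μ.IsMulLeftInvariant] [ν.IsMulRightInvariant] : μ = ν := by
  refine Measure.ext_of_lintegral _ fun f hf => ?_
  have hswap : ∫⁻ u, ∫⁻ v, f (u * v) ∂μ ∂ν = ∫⁻ v, ∫⁻ u, f (u * v) ∂ν ∂μ :=
    lintegral_lintegral_swap (hf.comp measurable_mul).aemeasurable
  simpa [lintegral_mul_left_eq_self, lintegral_mul_right_eq_self] using hswap

theorem isMulRightInvariant_of_isMulLeftInvariant {G : Type*} [Group G] [MeasurableSpace G]
    [MeasurableMul₂ G] [MeasurableInv G] (μ : Measure G) [IsProbabilityMeasure μ]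
    [μ.IsMulLeftInvariant] : μ.IsMulRightInvariant := by
  have : IsProbabilityMeasure μ.inv :=
    Measure.isProbabilityMeasure_map measurable_inv.aemeasurable
  rw [eq_of_isMulLeftInvariant_of_isMulRightInvariant μ μ.inv]
  infer_instance

section UnitaryGroup

variable {ι 𝕜 : Type*} [Fintype ι] [DecidableEq ι] [RCLike 𝕜]

theorem diagonal_mem_unitaryGroup {v : ι → 𝕜} (hv : ∀ m, v m ∈ unitary 𝕜) :
    diagonal v ∈ unitaryGroup ι 𝕜 := by
  rw [mem_unitaryGroup_iff, star_eq_conjTranspose, diagonal_conjTranspose, diagonal_mul_diagonal,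
    ← diagonal_one]
  exact congrArg diagonal (funext fun m => Unitary.mul_star_self_of_mem (hv m))

instance compactSpace_unitaryGroup : CompactSpace (unitaryGroup ι 𝕜) := by
  refine isCompact_iff_compactSpace.1 ?_
  refine (isCompact_univ_pi fun _ => isCompact_univ_pi fun _ =>
    isCompact_closedBall (0 : 𝕜) 1).of_isClosed_subset (isClosed_unitary (R := Matrix ι ι 𝕜)) ?_
  intro U hU i _ j _
  exact mem_closedBall_zero_iff.2 (entry_norm_bound_of_unitary hU i j)

instance secondCountableTopology_unitaryGroup :
    SecondCountableTopology (unitaryGroup ι 𝕜) := by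
  have : SecondCountableTopology (Matrix ι ι 𝕜) :=
    inferInstanceAs (SecondCountableTopology (ι → ι → 𝕜))
  exact TopologicalSpace.Subtype.secondCountableTopology _

@[fun_prop]
theorem continuous_unitaryGroup_apply (i j : ι) :
    Continuous fun U : unitaryGroup ι 𝕜 => (U : Matrix ι ι 𝕜) i j :=
  continuous_subtype_val.matrix_elem i j

theorem sum_norm_sq_row (U : unitaryGroup ι 𝕜) (i : ι) :
    ∑ m, ‖(U : Matrix ι ι 𝕜) i m‖ ^ 2 = 1 := by
  have h := congrFun (congrFun (mem_unitaryGroup_iff.1 U.2) i) i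
  simp only [mul_apply, star_apply, RCLike.star_def, RCLike.mul_conj, one_apply_eq] at h
  exact_mod_cast h

theorem exists_unitaryGroup_col_eq (w : EuclideanSpace 𝕜 ι) (i : ι) :
    ∃ V : unitaryGroup ι 𝕜, ∀ m, w m = ‖w‖ * (V : Matrix ι ι 𝕜) m i := by
  rcases eq_or_ne w 0 with rfl | hw
  · exact ⟨1, by simp⟩
  have hw' : (‖w‖ : 𝕜) ≠ 0 := by simpa using hw
  have hunit : Orthonormal 𝕜 (({i} : Set ι).domRestrict fun _ => (‖w‖⁻¹ : 𝕜) • w) :=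
    ⟨fun _ => by simp [norm_smul, hw], Subsingleton.pairwise⟩
  obtain ⟨b, hb⟩ := hunit.exists_orthonormalBasis_extension_of_card_eq finrank_euclideanSpace
  let V : unitaryGroup ι 𝕜 := ⟨(EuclideanSpace.basisFun ι 𝕜).toBasis.toMatrix b,
    (EuclideanSpace.basisFun ι 𝕜).toMatrix_orthonormalBasis_mem_unitary b⟩
  refine ⟨V, fun m => ?_⟩
  have hV : (V : Matrix ι ι 𝕜) m i = b i m := by
    simp [V, Basis.toMatrix_apply]
  rw [hV, hb i rfl, PiLp.smul_apply, smul_eq_mul, mul_inv_cancel_left₀ hw']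

end UnitaryGroup

section RowMonomial

variable {ι 𝕜 : Type*} [Fintype ι] [DecidableEq ι] [RCLike 𝕜]

/-- The monomial with exponents `α` in the entries of the `i`-th row of a unitary matrix, as a
function of the matrix. -/
def rowMonomial (i : ι) (α : ι → ℕ) (U : unitaryGroup ι 𝕜) : 𝕜 :=
  ∏ m, (U : Matrix ι ι 𝕜) i m ^ α m

@[fun_prop]
theorem continuous_rowMonomial (i : ι) (α : ι → ℕ) :
    Continuous (rowMonomial i α : unitaryGroup ι 𝕜 → 𝕜) := by
  unfold rowMonomial
  fun_prop

theorem rowMonomial_mul_diagonal (i : ι) (α : ι → ℕ) (U V : unitaryGroup ι 𝕜) {v : ι → 𝕜}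
    (hV : (V : Matrix ι ι 𝕜) = diagonal v) :
    rowMonomial i α (U * V) = (∏ m, v m ^ α m) * rowMonomial i α U := by
  simp [rowMonomial, hV, mul_diagonal, mul_pow, prod_mul_distrib, mul_comm]

theorem sum_multinomial_mul_norm_rowMonomial_sq (U : unitaryGroup ι 𝕜) (i : ι) (d : ℕ) :
    ∑ α ∈ univ.piAntidiag d, Nat.multinomial univ α * ‖rowMonomial i α U‖ ^ 2 = 1 := by
  have h := sum_pow_eq_sum_piAntidiag univ (fun m => ‖(U : Matrix ι ι 𝕜) i m‖ ^ 2) d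
  rw [sum_norm_sq_row, one_pow] at h
  simp_rw [h, rowMonomial, norm_prod, norm_pow, ← prod_pow, pow_right_comm]

theorem integral_norm_row_dotProduct_pow [MeasurableSpace (unitaryGroup ι 𝕜)]
    [BorelSpace (unitaryGroup ι 𝕜)] (μ : Measure (unitaryGroup ι 𝕜)) [μ.IsMulRightInvariant]
    (i : ι) (w : EuclideanSpace 𝕜 ι) (k : ℕ) :
    ∫ U : unitaryGroup ι 𝕜, ‖∑ m, (U : Matrix ι ι 𝕜) i m * w m‖ ^ k ∂μ =
      ‖w‖ ^ k * ∫ U : unitaryGroup ι 𝕜, ‖(U : Matrix ι ι 𝕜) i i‖ ^ k ∂μ := by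
  obtain ⟨V, hV⟩ := exists_unitaryGroup_col_eq w i
  have hcol (U : unitaryGroup ι 𝕜) :
      ∑ m, (U : Matrix ι ι 𝕜) i m * w m =
        ‖w‖ * ((U * V : unitaryGroup ι 𝕜) : Matrix ι ι 𝕜) i i := by
    simp_rw [hV, Submonoid.coe_mul, mul_apply, mul_sum, mul_left_comm]
  simp_rw [hcol, norm_mul, mul_pow]
  rw [integral_const_mul, integral_mul_right_eq_self
    (fun U : unitaryGroup ι 𝕜 => ‖(U : Matrix ι ι 𝕜) i i‖ ^ k) V]
  simp

end RowMonomial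

section Moments

variable {ι : Type*} [Fintype ι] [DecidableEq ι] [MeasurableSpace (unitaryGroup ι ℂ)]
  [BorelSpace (unitaryGroup ι ℂ)] (μ : Measure (unitaryGroup ι ℂ)) [μ.IsMulRightInvariant]

theorem integral_rowMonomial_mul_conj_of_ne (i : ι) {α β : ι → ℕ} (hαβ : α ≠ β) :
    ∫ U, rowMonomial i α U * conj (rowMonomial i β U) ∂μ = 0 := by
  obtain ⟨m, hm⟩ := Function.ne_iff.1 hαβ
  obtain ⟨z, hphase⟩ := exists_circle_pow_mul_conj_pow_ne_one hm
  let v : ι → Circle := Pi.mulSingle m z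
  let V : unitaryGroup ι ℂ := ⟨diagonal fun k => (v k : ℂ), diagonal_mem_unitaryGroup fun k => by
    simp [Unitary.mem_iff, Complex.mul_conj, mul_comm]⟩
  have hv (γ : ι → ℕ) : ∏ k, (v k : ℂ) ^ γ k = (z : ℂ) ^ γ m := by
    rw [Fintype.prod_eq_single m fun k hk => by simp [v, hk]]
    simp [v]
  have htranslate (U : unitaryGroup ι ℂ) :
      rowMonomial i α (U * V) * conj (rowMonomial i β (U * V)) =
        (z ^ α m * conj (z : ℂ) ^ β m) * (rowMonomial i α U * conj (rowMonomial i β U)) := by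
    rw [rowMonomial_mul_diagonal i α U V rfl, rowMonomial_mul_diagonal i β U V rfl, hv, hv,
      map_mul, map_pow]
    ring
  have hinv := integral_mul_right_eq_self (μ := μ)
    (fun U => rowMonomial i α U * conj (rowMonomial i β U)) V
  simp_rw [htranslate] at hinv
  rw [integral_const_mul] at hinv
  by_contra hne
  exact hphase ((mul_eq_right₀ hne).1 hinv)

theorem integral_norm_row_dotProduct_pow_eq_sum [IsFiniteMeasure μ] (i : ι) (w : ι → ℂ) (d : ℕ) :
    ∫ U : unitaryGroup ι ℂ, ‖∑ m, (U : Matrix ι ι ℂ) i m * w m‖ ^ (2 * d) ∂μ =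
      ∑ α ∈ univ.piAntidiag d, ((Nat.multinomial univ α : ℝ) ^ 2 *
        ∫ U, ‖rowMonomial i α U‖ ^ 2 ∂μ) * ∏ m, (‖w m‖ ^ 2) ^ α m := by
  let c (α : ι → ℕ) : ℂ := Nat.multinomial univ α * ∏ m, w m ^ α m
  let f (α : ι → ℕ) (U : unitaryGroup ι ℂ) : ℂ := c α * rowMonomial i α U
  have hexpand (U : unitaryGroup ι ℂ) :
      (∑ m, (U : Matrix ι ι ℂ) i m * w m) ^ d = ∑ α ∈ univ.piAntidiag d, f α U := by
    simp_rw [sum_pow_eq_sum_piAntidiag, f, c, rowMonomial, mul_pow, prod_mul_distrib]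
    exact sum_congr rfl fun α _ => by ring
  have hf (α : ι → ℕ) : MemLp (f α) 2 μ :=
    (by fun_prop : Continuous (f α)).memLp_of_hasCompactSupport (.of_compactSpace _)
  have horth (α β : ι → ℕ) (hαβ : α ≠ β) : ∫ U, f α U * conj (f β U) ∂μ = 0 := by
    have hfactor (U : unitaryGroup ι ℂ) : f α U * conj (f β U) =
        (c α * conj (c β)) * (rowMonomial i α U * conj (rowMonomial i β U)) := by
      rw [map_mul]
      exact mul_mul_mul_comm ..
    simp_rw [hfactor]
    rw [integral_const_mul, integral_rowMonomial_mul_conj_of_ne μ i hαβ, mul_zero]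
  have hcoeff (α : ι → ℕ) :
      ‖c α‖ ^ 2 = (Nat.multinomial univ α : ℝ) ^ 2 * ∏ m, (‖w m‖ ^ 2) ^ α m := by
    simp [c, mul_pow, ← prod_pow, pow_right_comm]
  calc ∫ U : unitaryGroup ι ℂ, ‖∑ m, (U : Matrix ι ι ℂ) i m * w m‖ ^ (2 * d) ∂μ
      = ∫ U, ‖∑ α ∈ univ.piAntidiag d, f α U‖ ^ 2 ∂μ := by
        simp_rw [← hexpand, norm_pow, ← pow_mul']
    _ = ∑ α ∈ univ.piAntidiag d, ∫ U, ‖f α U‖ ^ 2 ∂μ :=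
        integral_norm_sq_sum_of_pairwise_orthogonal (fun α _ => hf α)
          fun α _ β _ hαβ => horth α β hαβ
    _ = _ := sum_congr rfl fun α _ => by
        simp_rw [f, norm_mul, mul_pow, integral_const_mul, hcoeff]
        ring

theorem multinomial_mul_integral_norm_rowMonomial_sq [IsFiniteMeasure μ] (i : ι) (α : ι → ℕ) :
    Nat.multinomial univ α * ∫ U, ‖rowMonomial i α U‖ ^ 2 ∂μ =
      ∫ U : unitaryGroup ι ℂ, ‖(U : Matrix ι ι ℂ) i i‖ ^ (2 * ∑ m, α m) ∂μ := by
  set d := ∑ m, α m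
  set c := ∫ U : unitaryGroup ι ℂ, ‖(U : Matrix ι ι ℂ) i i‖ ^ (2 * d) ∂μ
  have hpoly (x : ι → ℝ) (hx : ∀ m, x m ∈ Set.Ici (0 : ℝ)) :
      ∑ β ∈ univ.piAntidiag d, ((Nat.multinomial univ β : ℝ) ^ 2 *
        ∫ U, ‖rowMonomial i β U‖ ^ 2 ∂μ) * ∏ m, x m ^ β m =
      ∑ β ∈ univ.piAntidiag d, (c * Nat.multinomial univ β) * ∏ m, x m ^ β m := by
    let w : EuclideanSpace ℂ ι := WithLp.toLp 2 fun m => (√(x m) : ℂ)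
    have hw (m : ι) : ‖w m‖ ^ 2 = x m := by
      simp [w, Real.sq_sqrt (hx m)]
    have hnorm : ‖w‖ ^ (2 * d) = (∑ m, x m) ^ d := by
      rw [pow_mul, EuclideanSpace.norm_sq_eq]
      simp_rw [hw]
    have h := (integral_norm_row_dotProduct_pow_eq_sum μ i w d).symm.trans
      (integral_norm_row_dotProduct_pow μ i w (2 * d))
    simp_rw [hw, hnorm, sum_pow_eq_sum_piAntidiag] at h
    rw [h, sum_mul]
    exact sum_congr rfl fun β _ => by ring
  have hcoeff := eq_of_sum_mul_prod_pow_eq (Set.Ici_infinite (0 : ℝ)) hpoly α (by simp [d])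
  have hne : (Nat.multinomial univ α : ℝ) ≠ 0 :=
    Nat.cast_ne_zero.2 (Nat.multinomial_pos univ α).ne'
  exact mul_left_cancel₀ hne (by linear_combination hcoeff)

theorem choose_mul_integral_norm_apply_self_pow [IsProbabilityMeasure μ] (i : ι) (d : ℕ) :
    (Fintype.card ι + d - 1).choose d *
      ∫ U : unitaryGroup ι ℂ, ‖(U : Matrix ι ι ℂ) i i‖ ^ (2 * d) ∂μ = 1 := by
  have hint (α : ι → ℕ) :
      Integrable (fun U => Nat.multinomial univ α * ‖rowMonomial i α U‖ ^ 2) μ :=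
    (by fun_prop : Continuous fun U : unitaryGroup ι ℂ =>
      (Nat.multinomial univ α : ℝ) * ‖rowMonomial i α U‖ ^ 2).integrable_of_hasCompactSupport
        (.of_compactSpace _)
  symm
  calc (1 : ℝ)
      = ∫ U, ∑ α ∈ univ.piAntidiag d, Nat.multinomial univ α * ‖rowMonomial i α U‖ ^ 2 ∂μ := by
        simp [sum_multinomial_mul_norm_rowMonomial_sq]
    _ = ∑ α ∈ univ.piAntidiag d,
          Nat.multinomial univ α * ∫ U, ‖rowMonomial i α U‖ ^ 2 ∂μ := by
        rw [integral_finsetSum _ fun α _ => hint α]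
        simp_rw [integral_const_mul]
    _ = ∑ _α ∈ univ.piAntidiag d,
          ∫ U : unitaryGroup ι ℂ, ‖(U : Matrix ι ι ℂ) i i‖ ^ (2 * d) ∂μ :=
        sum_congr rfl fun _ hα => by
          rw [multinomial_mul_integral_norm_rowMonomial_sq, (mem_piAntidiag.1 hα).1]
    _ = _ := by
        rw [sum_const, card_piAntidiag_nat_eq_choose, nsmul_eq_mul, card_univ]

theorem integral_norm_rowMonomial_sq [IsProbabilityMeasure μ] (i : ι) (α : ι → ℕ) :
    ∫ U, ‖rowMonomial i α U‖ ^ 2 ∂μ =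
      (∏ m, (α m)! : ℝ) / (Fintype.card ι).ascFactorial (∑ m, α m) := by
  set d := ∑ m, α m
  have hmult : (∏ m, (α m)! : ℝ) * Nat.multinomial univ α = d ! := by
    exact_mod_cast Nat.multinomial_spec univ α
  have hasc : ((Fintype.card ι).ascFactorial d : ℝ) = d ! * (Fintype.card ι + d - 1).choose d := by
    exact_mod_cast Nat.ascFactorial_eq_factorial_mul_choose' (Fintype.card ι) d
  have hmoment := multinomial_mul_integral_norm_rowMonomial_sq μ i α
  have hdiag := choose_mul_integral_norm_apply_self_pow μ i d
  rw [← hmoment] at hdiag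
  have hchoose : ((Fintype.card ι + d - 1).choose d : ℝ) ≠ 0 := left_ne_zero_of_mul_eq_one hdiag
  have hfact : (d ! : ℝ) ≠ 0 := Nat.cast_ne_zero.2 d.factorial_ne_zero
  rw [hasc, eq_div_iff (mul_ne_zero hfact hchoose), ← hmult]
  linear_combination (∏ m, (α m)! : ℝ) * hdiag

end Moments

end UnitaryRow

theorem haar_integral_first_row_same_type_general {ι κ : Type*} [Fintype ι] [DecidableEq ι]
    [Fintype κ] [MeasurableSpace (unitaryGroup ι ℂ)] [BorelSpace (unitaryGroup ι ℂ)]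
    (μ : Measure (unitaryGroup ι ℂ)) [IsProbabilityMeasure μ] [μ.IsMulLeftInvariant]
    (i : ι) (J L : κ → ι) (htype : ∃ σ : Equiv.Perm κ, ∀ k, J (σ k) = L k) :
    ∫ U : unitaryGroup ι ℂ, (∏ k, (U : Matrix ι ι ℂ) i (J k)) *
        ∏ k, conj ((U : Matrix ι ι ℂ) i (L k)) ∂μ =
      (∏ m, (#{k | J k = m})! : ℂ) / ∏ k ∈ range (Fintype.card κ), ((Fintype.card ι : ℂ) + k) := by
  have := UnitaryRow.isMulRightInvariant_of_isMulLeftInvariant μ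
  obtain ⟨σ, hσ⟩ := htype
  let r (m : ι) : ℕ := #{k | J k = m}
  have hr : ∑ m, r m = Fintype.card κ := by
    simpa using (card_eq_sum_card_fiberwise (s := univ) (t := univ) fun k _ => mem_univ (J k)).symm
  have hintegrand (U : unitaryGroup ι ℂ) :
      (∏ k, (U : Matrix ι ι ℂ) i (J k)) * ∏ k, conj ((U : Matrix ι ι ℂ) i (L k)) =
        ((‖UnitaryRow.rowMonomial i r U‖ ^ 2 : ℝ) : ℂ) := by
    have hJ : ∏ k, (U : Matrix ι ι ℂ) i (J k) = UnitaryRow.rowMonomial i r U := by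
      rw [← prod_fiberwise' univ J]
      simp_rw [prod_const]
      rfl
    simp_rw [← hσ]
    rw [Equiv.prod_comp σ fun k => conj ((U : Matrix ι ι ℂ) i (J k)), ← map_prod, hJ,
      Complex.mul_conj', Complex.ofReal_pow]
  simp_rw [hintegrand]
  rw [integral_complex_ofReal, UnitaryRow.integral_norm_rowMonomial_sq, hr,
    Nat.ascFactorial_eq_prod_range]
  push_cast
  rfl

/-- If the multi-indices `J` and `L` (with entries in `{1,…,n}`) are of the same type, then
`∫ u_{1,j_1} ⋯ u_{1,j_d} conj(u_{1,l_1}) ⋯ conj(u_{1,l_d}) dμ(U)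
  = (∏_m r_m!) / (n(n+1)⋯(n+d−1))`,
where `r_m` is the number of occurrences of the value `m` in `J`, for the normalized Haar
measure `μ` on `U_n`. -/
theorem haar_integral_first_row_same_type
    (n d : ℕ) (hn : 0 < n) (μ : Measure (Matrix.unitaryGroup (Fin n) ℂ))
    [IsProbabilityMeasure μ]
    (hinv : ∀ V : Matrix.unitaryGroup (Fin n) ℂ, μ.map (fun U => V * U) = μ)
    (J L : Fin d → Fin n)
    (htype : ∃ σ : Equiv.Perm (Fin d), ∀ k, J (σ k) = L k) :
    (∫ U : Matrix.unitaryGroup (Fin n) ℂ,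
        (∏ k : Fin d, (U : Matrix (Fin n) (Fin n) ℂ) ⟨0, hn⟩ (J k)) *
        (∏ k : Fin d, (starRingEnd ℂ) ((U : Matrix (Fin n) (Fin n) ℂ) ⟨0, hn⟩ (L k))) ∂μ) =
      (∏ m : Fin n, (Nat.factorial (Finset.univ.filter (fun k => J k = m)).card : ℂ)) /
        (∏ k ∈ Finset.range d, ((n : ℂ) + k)) := by
  have : BorelSpace (unitaryGroup (Fin n) ℂ) := ⟨rfl⟩
  have : μ.IsMulLeftInvariant := ⟨hinv⟩
  simpa using haar_integral_first_row_same_type_general μ ⟨0, hn⟩ J L htype
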